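/- Let ζ̂ be a strong memoryless time for (ζ,V) with parameters (γ,μ), and set σ(t) = ℙ(ζ̂ ≤ t, ζ > t). Then for all s, t, u ∈ ℝ₊ and A ∈ 𝒮: (i) ℙ(ζ̂ ≤ s, 0 < ζ − ζ̂ ≤ u, V ∈ A) = ℙ(ζ̂ ≤ s, ζ̂ < ζ)·(1 − e^{−γu})·μ(A); (ii) ℙ(ζ̂ ≤ t, ζ̂ < ζ) = σ(t) + γ∫₀ᵗ σ(x) dx; (iii) ℙ(ζ̂ = ζ ≤ t, V ∈ A) = ℙ(ζ ≤ t, V ∈ A) − μ(A)·γ∫₀ᵗ σ(x) dx. -/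

import Mathlib

/-!
Conditionally on `{ζhat ≤ t < ζ}` the overshoot `ζ - t` is exponential and independent of `V`, so
`ℙ(ζhat ≤ t, ζ > t + a, V ∈ A) = σ(t) exp(-γ a) μ(A)` for all `t, a ≥ 0` (`MemorylessTail`; the
case `σ(t) = 0` is trivial). Everything follows from this identity by two limits.

Replacing the deterministic time `t` by `ζhat` itself: subtracting the identity for `ζhat ≤ r` from
the one for `ζhat ≤ t` shows that it holds on each strip `{r < ζhat ≤ t}` (`MemorylessTail.strip`).
Summing over strips gives it at `ζhat` rounded up to a grid (`MemorylessTail.grid`), and refining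
the grid yields `ℙ(ζhat ≤ s, ζ - ζhat > u, V ∈ A) = ℙ(ζhat ≤ s, ζhat < ζ) exp(-γ u) μ(A)`
(`MemorylessTail.tail`). Taking complements in `u` is (i).

For (ii) and (iii), what is needed is `ℙ(ζhat < ζ ≤ t, V ∈ A) = μ(A) γ ∫₀ᵗ σ`
(`MemorylessTail.strict_lt`). By the identity,
`ℙ(ζhat ≤ x < ζ ≤ x + h, V ∈ A) = σ(x) (1 - exp(-γ h)) μ(A)`. Integrating over `x ∈ (0, t]` and
dividing by `h`, the left side is by Tonelli the expectation over `{V ∈ A}` of `h⁻¹` times the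
length of `(0, t] ∩ [ζhat, ζ) ∩ [ζ - h, ζ)`. This ratio is at most `1` and equals the indicator of
`{ζhat < ζ ≤ t}` for small `h`, so dominated convergence applies as `h → 0`. No regularity of `σ`
beyond measurability is involved.
-/

open MeasureTheory ProbabilityTheory Real Set

/-- The exponential distribution on `[0, ∞)` with mean `γ⁻¹` (rate `γ`), as a measure on `ℝ`. -/
noncomputable def expν (γ : ℝ) : Measure ℝ :=
  MeasureTheory.volume.withDensity
    (fun x => if 0 ≤ x then ENNReal.ofReal (γ * Real.exp (-γ * x)) else 0)

theorem expν_Ioi {γ : ℝ} (hγ : 0 < γ) {a : ℝ} (ha : 0 ≤ a) :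
    expν γ (Ioi a) = ENNReal.ofReal (Real.exp (-γ * a)) := by
  rw [expν, withDensity_apply _ measurableSet_Ioi]
  have h1 : ∫⁻ x in Ioi a, (if 0 ≤ x then ENNReal.ofReal (γ * Real.exp (-γ * x)) else 0) =
      ∫⁻ x in Ioi a, ENNReal.ofReal (γ * Real.exp (-γ * x)) := by
    refine setLIntegral_congr_fun measurableSet_Ioi fun x hx => ?_
    simp [ha.trans (le_of_lt hx)]
  rw [h1, ← ofReal_integral_eq_lintegral_ofReal
    ((exp_neg_integrableOn_Ioi a hγ).const_mul γ)
    (Filter.Eventually.of_forall fun x => by positivity),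
    integral_const_mul, integral_exp_mul_Ioi (neg_neg_of_pos hγ)]
  congr 1
  field_simp

/-! ### Unconditional form of the memoryless property -/

/-- The memoryless property in unconditional form: on `{ζhat ≤ t < ζ}` the overshoot `ζ - t` has
tail `exp (-γ a)` and is independent of `V`, which has law `μ`. -/
def MemorylessTail {Ω S : Type*} [MeasurableSpace Ω] [MeasurableSpace S] (P : Measure Ω)
    (μ : Measure S) (γ : ℝ) (ζ : Ω → ℝ) (V : Ω → S) (ζhat : Ω → ℝ) : Prop :=
  ∀ t a : ℝ, 0 ≤ t → 0 ≤ a → ∀ A : Set S, MeasurableSet A →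
    P {ω | ζhat ω ≤ t ∧ t + a < ζ ω ∧ V ω ∈ A} =
      P {ω | ζhat ω ≤ t ∧ t < ζ ω} * (ENNReal.ofReal (Real.exp (-γ * a)) * μ A)

section

variable {Ω S : Type*} [MeasurableSpace Ω] [MeasurableSpace S] {P : Measure Ω}
  {μ : Measure S} {γ : ℝ} {ζ : Ω → ℝ} {V : Ω → S} {ζhat : Ω → ℝ}

theorem memorylessTail_of_cond [IsProbabilityMeasure P] [IsProbabilityMeasure μ]
    (hγ : 0 < γ) (hζm : Measurable ζ) (hVm : Measurable V) (hζhatm : Measurable ζhat)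
    (hcond : ∀ t, 0 ≤ t → 0 < P {ω | ζhat ω ≤ t ∧ t < ζ ω} →
      Measure.map (fun ω => (ζ ω - t, V ω)) (P[|{ω | ζhat ω ≤ t ∧ t < ζ ω}]) =
        (expν γ).prod μ) :
    MemorylessTail P μ γ ζ V ζhat := by
  intro t a ht ha A hA
  have hE : MeasurableSet {ω | ζhat ω ≤ t ∧ t < ζ ω} :=
    (measurableSet_le hζhatm measurable_const).inter (measurableSet_lt measurable_const hζm)
  rcases eq_zero_or_pos (P {ω | ζhat ω ≤ t ∧ t < ζ ω}) with h0 | hpos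
  · rw [h0, zero_mul]
    refine measure_mono_null (fun ω hω => ?_) h0
    exact ⟨hω.1, lt_of_le_of_lt (by linarith) hω.2.1⟩
  · have h := congrArg (fun m => m (Ioi a ×ˢ A)) (hcond t ht hpos)
    rw [Measure.prod_prod, expν_Ioi hγ ha,
      Measure.map_apply ((hζm.sub_const t).prodMk hVm) (measurableSet_Ioi.prod hA),
      cond_apply hE] at h
    rw [← h, ← mul_assoc, ENNReal.mul_inv_cancel hpos.ne' (measure_ne_top _ _), one_mul]
    congr 1
    ext ω
    simp only [mem_ofPred_eq, mem_inter_iff, mem_preimage, mem_prod, mem_Ioi]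
    constructor
    · rintro ⟨h1, h2, h3⟩
      exact ⟨⟨h1, by linarith⟩, by linarith, h3⟩
    · rintro ⟨⟨h1, -⟩, h2, h3⟩
      exact ⟨h1, by linarith, h3⟩

/-! ### Replacing a fixed time by `ζhat` -/

/-- The factorization survives restricting `ζhat` to a strip `(r, t]`: the part `ζhat ≤ r` can be
subtracted because it obeys the memoryless property both at time `r` and at time `t`. -/
theorem MemorylessTail.strip [IsProbabilityMeasure P] [IsProbabilityMeasure μ]
    (H : MemorylessTail P μ γ ζ V ζhat)
    (hζhatm : Measurable ζhat)
    {r t u : ℝ} (hr : 0 ≤ r) (hrt : r ≤ t) (hu : 0 ≤ u) {A : Set S} (hA : MeasurableSet A) :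
    P {ω | (r < ζhat ω ∧ ζhat ω ≤ t) ∧ t + u < ζ ω ∧ V ω ∈ A} =
      P {ω | (r < ζhat ω ∧ ζhat ω ≤ t) ∧ t < ζ ω} *
        (ENNReal.ofReal (Real.exp (-γ * u)) * μ A) := by
  have hM : MeasurableSet {ω | ζhat ω ≤ r} := measurableSet_le hζhatm measurable_const
  have key : ∀ (v : ℝ), 0 ≤ v → ∀ B : Set S, MeasurableSet B →
      P {ω | ζhat ω ≤ r ∧ t + v < ζ ω ∧ V ω ∈ B} +
        P {ω | (r < ζhat ω ∧ ζhat ω ≤ t) ∧ t + v < ζ ω ∧ V ω ∈ B} =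
      P {ω | ζhat ω ≤ t ∧ t + v < ζ ω ∧ V ω ∈ B} := by
    intro v hv B hB
    rw [← measure_inter_add_sdiff {ω | ζhat ω ≤ t ∧ t + v < ζ ω ∧ V ω ∈ B} hM]
    congr 2 <;> ext ω <;> simp only [mem_ofPred_eq, mem_inter_iff, mem_sdiff, not_le]
    · constructor
      · rintro ⟨h1, h2, h3⟩
        exact ⟨⟨by linarith, h2, h3⟩, h1⟩
      · rintro ⟨⟨h1, h2, h3⟩, h4⟩
        exact ⟨h4, h2, h3⟩
    · tauto
  have hr' : ∀ (v : ℝ), 0 ≤ v → ∀ B : Set S, MeasurableSet B →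
      P {ω | ζhat ω ≤ r ∧ t + v < ζ ω ∧ V ω ∈ B} =
        P {ω | ζhat ω ≤ r ∧ r < ζ ω} *
          (ENNReal.ofReal (Real.exp (-γ * (t - r + v))) * μ B) := by
    intro v hv B hB
    rw [← H r (t - r + v) hr (by linarith) B hB]
    simp only [show r + (t - r + v) = t + v by ring]
  have e1 := key u hu A hA
  have e2 := key 0 le_rfl univ MeasurableSet.univ
  rw [hr' u hu A hA, H t u (hr.trans hrt) hu A hA] at e1
  rw [hr' 0 le_rfl univ MeasurableSet.univ] at e2
  simp only [add_zero, mem_univ, and_true, measure_univ, mul_one] at e2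
  rw [← e2, show -γ * (t - r + u) = -γ * (t - r) + -γ * u by ring, Real.exp_add,
    ENNReal.ofReal_mul (Real.exp_pos _).le, add_mul] at e1
  have hfin : P {ω | ζhat ω ≤ r ∧ r < ζ ω} * ENNReal.ofReal (Real.exp (-γ * (t - r))) *
      (ENNReal.ofReal (Real.exp (-γ * u)) * μ A) ≠ ⊤ := by finiteness
  refine (ENNReal.add_right_inj hfin).1 ?_
  rw [← e1]
  congr 1
  ring

/-- Factorization with `ζhat` rounded up to the grid `h ℕ`; the grid cells are strips. -/
theorem MemorylessTail.grid [IsProbabilityMeasure P] [IsProbabilityMeasure μ]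
    (H : MemorylessTail P μ γ ζ V ζhat)
    (hζhatm : Measurable ζhat) {h u : ℝ} (hh : 0 < h) (hu : 0 ≤ u) {A : Set S} (hA : MeasurableSet A) (k : ℕ) :
    P {ω | ⌈ζhat ω / h⌉₊ ≤ k ∧ ⌈ζhat ω / h⌉₊ * h + u < ζ ω ∧ V ω ∈ A} =
      P {ω | ⌈ζhat ω / h⌉₊ ≤ k ∧ ⌈ζhat ω / h⌉₊ * h < ζ ω} *
        (ENNReal.ofReal (Real.exp (-γ * u)) * μ A) := by
  have hz : ∀ ω, ⌈ζhat ω / h⌉₊ ≤ 0 ↔ ζhat ω ≤ 0 := fun ω => by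
    rw [Nat.ceil_le, div_le_iff₀ hh]; simp
  have hs : ∀ ω (k : ℕ), ⌈ζhat ω / h⌉₊ = k + 1 ↔ (k * h < ζhat ω ∧ ζhat ω ≤ (k + 1 : ℕ) * h) :=
    fun ω k => by
      rw [Nat.ceil_eq_iff (Nat.succ_ne_zero k), div_le_iff₀ hh, lt_div_iff₀ hh]
      simp
  have hNm : Measurable fun ω => ⌈ζhat ω / h⌉₊ := Nat.measurable_ceil.comp (hζhatm.div_const h)
  have split : ∀ (k : ℕ) (v : ℝ) (B : Set S),
      P {ω | ⌈ζhat ω / h⌉₊ ≤ k + 1 ∧ ⌈ζhat ω / h⌉₊ * h + v < ζ ω ∧ V ω ∈ B} =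
      P {ω | ⌈ζhat ω / h⌉₊ ≤ k ∧ ⌈ζhat ω / h⌉₊ * h + v < ζ ω ∧ V ω ∈ B} +
      P {ω | ((k : ℝ) * h < ζhat ω ∧ ζhat ω ≤ (k + 1 : ℕ) * h) ∧
        (k + 1 : ℕ) * h + v < ζ ω ∧ V ω ∈ B} := by
    intro k v B
    have hM : MeasurableSet {ω | ⌈ζhat ω / h⌉₊ ≤ k} := measurableSet_le hNm measurable_const
    rw [← measure_inter_add_sdiff
      {ω | ⌈ζhat ω / h⌉₊ ≤ k + 1 ∧ ⌈ζhat ω / h⌉₊ * h + v < ζ ω ∧ V ω ∈ B} hM]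
    congr 2 <;> ext ω <;> simp only [mem_ofPred_eq, mem_inter_iff, mem_sdiff, not_le]
    · constructor
      · rintro ⟨⟨h1, h2⟩, h3⟩
        exact ⟨h3, h2⟩
      · rintro ⟨h1, h2⟩
        exact ⟨⟨by omega, h2⟩, h1⟩
    · rw [← hs]
      constructor
      · rintro ⟨⟨h1, h2⟩, h3⟩
        have : ⌈ζhat ω / h⌉₊ = k + 1 := by omega
        rw [this] at h2
        exact ⟨this, h2⟩
      · rintro ⟨h1, h2⟩
        rw [h1]
        exact ⟨⟨le_rfl, h2⟩, by omega⟩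
  induction k with
  | zero =>
    have hz' : ∀ ω, ζhat ω ≤ 0 → ⌈ζhat ω / h⌉₊ = 0 := fun ω hω => Nat.le_zero.1 ((hz ω).2 hω)
    have := H 0 u le_rfl hu A hA
    convert this using 2
    · ext ω
      simp only [mem_ofPred_eq, hz]
      refine and_congr_right fun h1 => ?_
      simp [hz' ω h1]
    · congr 1
      ext ω
      simp only [mem_ofPred_eq, hz]
      refine and_congr_right fun h1 => ?_
      simp [hz' ω h1]
  | succ k ih =>
    have e2 := split k 0 univ
    simp only [add_zero, mem_univ, and_true] at e2
    rw [split k u A, ih, e2, add_mul, H.strip hζhatm (by positivity) _ hu hA]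
    push_cast
    nlinarith

/-- `ζ - ζhat` has the exponential tail, independently of `V` and of `ζhat`, on `{ζhat < ζ}`:
the limit of `MemorylessTail.grid` as the mesh `s / k` tends to `0`. -/
theorem MemorylessTail.tail [IsProbabilityMeasure P] [IsProbabilityMeasure μ]
    (H : MemorylessTail P μ γ ζ V ζhat)
    (hζm : Measurable ζ) (hVm : Measurable V)
    (hζhatm : Measurable ζhat) (hζhat0 : ∀ ω, 0 ≤ ζhat ω)
    {s u : ℝ} (hs : 0 ≤ s) (hu : 0 ≤ u) {A : Set S} (hA : MeasurableSet A) :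
    P {ω | ζhat ω ≤ s ∧ ζhat ω + u < ζ ω ∧ V ω ∈ A} =
      P {ω | ζhat ω ≤ s ∧ ζhat ω < ζ ω} * (ENNReal.ofReal (Real.exp (-γ * u)) * μ A) := by
  rcases hs.eq_or_lt with rfl | hs
  · have := H 0 u le_rfl hu A hA
    convert this using 2
    · ext ω
      refine and_congr_right fun h1 => ?_
      rw [le_antisymm h1 (hζhat0 ω)]
    · congr 1
      ext ω
      refine and_congr_right fun h1 => ?_
      rw [le_antisymm h1 (hζhat0 ω)]
  have lim : ∀ (v : ℝ) (B : Set S), MeasurableSet B → Filter.Tendsto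
      (fun k : ℕ => P {ω | ⌈ζhat ω / (s / k)⌉₊ ≤ k ∧
        ⌈ζhat ω / (s / k)⌉₊ * (s / k) + v < ζ ω ∧ V ω ∈ B}) Filter.atTop
      (nhds (P {ω | ζhat ω ≤ s ∧ ζhat ω + v < ζ ω ∧ V ω ∈ B})) := by
    intro v B hB
    refine tendsto_measure_of_tendsto_indicator_of_isFiniteMeasure Filter.atTop P ?_ ?_
    · intro k
      have hNm : Measurable fun ω => ⌈ζhat ω / (s / k)⌉₊ :=
        Nat.measurable_ceil.comp (hζhatm.div_const _)
      refine (measurableSet_le hNm measurable_const).inter (MeasurableSet.inter ?_ (hVm hB))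
      refine measurableSet_lt (Measurable.add_const (Measurable.mul_const ?_ _) _) hζm
      exact measurable_from_nat.comp hNm
    · intro ω
      have hev : ∀ᶠ k : ℕ in Filter.atTop,
          ζhat ω + v < ζ ω → s / k < ζ ω - v - ζhat ω := by
        by_cases hc : ζhat ω + v < ζ ω
        · have := (tendsto_const_div_atTop_nhds_zero_nat s).eventually_lt_const
            (show 0 < ζ ω - v - ζhat ω by linarith)
          filter_upwards [this] with k hk _ using hk
        · exact Filter.Eventually.of_forall fun k h => absurd h hc
      filter_upwards [hev, Filter.eventually_gt_atTop 0] with k h1 hk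
      have hk' : (0 : ℝ) < k := by exact_mod_cast hk
      have hh : 0 < s / k := by positivity
      have hle : ⌈ζhat ω / (s / k)⌉₊ ≤ k ↔ ζhat ω ≤ s := by
        rw [Nat.ceil_le, div_le_iff₀ hh, mul_div_cancel₀ _ hk'.ne']
      have hlow : ζhat ω ≤ ⌈ζhat ω / (s / k)⌉₊ * (s / k) := by
        rw [← div_le_iff₀ hh]
        exact Nat.le_ceil _
      have hup : ⌈ζhat ω / (s / k)⌉₊ * (s / k) < ζhat ω + s / k := by
        have := Nat.ceil_lt_add_one (div_nonneg (hζhat0 ω) hh.le)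
        calc _ < (ζhat ω / (s / k) + 1) * (s / k) := mul_lt_mul_of_pos_right this hh
          _ = _ := by rw [add_mul, div_mul_cancel₀ _ hh.ne', one_mul]
      simp only [hle]
      constructor
      · rintro ⟨a, b, c⟩
        exact ⟨a, by linarith, c⟩
      · rintro ⟨a, b, c⟩
        have := h1 b
        exact ⟨a, by linarith, c⟩
  have l1 := lim u A hA
  have l2 := lim 0 univ MeasurableSet.univ
  simp only [add_zero, mem_univ, and_true] at l2
  refine tendsto_nhds_unique (l1.congr' ?_) (ENNReal.Tendsto.mul_const l2 (Or.inr ?_))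
  · filter_upwards [Filter.eventually_gt_atTop 0] with k hk
    exact H.grid hζhatm (by positivity) hu hA k
  · finiteness

/-! ### The rate at which `ζ` occurs after `ζhat` -/

/-- Passage from a tail `e` to the complementary probability `1 - e`, by cancelling in
`ENNReal`. -/
theorem eq_mul_one_sub_of_add_eq {p m Y : ENNReal} (hp : p ≠ ⊤) (hm : m ≠ ⊤) {e : ℝ}
    (he0 : 0 ≤ e) (he1 : e ≤ 1) (h : p * (ENNReal.ofReal e * m) + Y = p * m) :
    Y = p * (ENNReal.ofReal (1 - e) * m) := by
  have hfin : p * (ENNReal.ofReal e * m) ≠ ⊤ := by finiteness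
  refine (ENNReal.add_right_inj hfin).1 ?_
  rw [h, ← mul_add, ← add_mul, ← ENNReal.ofReal_add he0 (by linarith)]
  simp

theorem exp_neg_mul_le_one (hγ : 0 < γ) {u : ℝ} (hu : 0 ≤ u) : Real.exp (-γ * u) ≤ 1 :=
  Real.exp_le_one_iff.2 (by nlinarith)

theorem MemorylessTail.window [IsProbabilityMeasure P] [IsProbabilityMeasure μ]
    (H : MemorylessTail P μ γ ζ V ζhat) (hγ : 0 < γ) (hζm : Measurable ζ)
    {t h : ℝ} (ht : 0 ≤ t) (hh : 0 ≤ h) {A : Set S} (hA : MeasurableSet A) :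
    P {ω | ζhat ω ≤ t ∧ t < ζ ω ∧ ζ ω ≤ t + h ∧ V ω ∈ A} =
      P {ω | ζhat ω ≤ t ∧ t < ζ ω} * (ENNReal.ofReal (1 - Real.exp (-γ * h)) * μ A) := by
  refine eq_mul_one_sub_of_add_eq (measure_ne_top _ _) (measure_ne_top _ _)
    (Real.exp_pos _).le (exp_neg_mul_le_one hγ hh) ?_
  have h0 := H t 0 ht le_rfl A hA
  simp only [add_zero, mul_zero, Real.exp_zero, ENNReal.ofReal_one, one_mul] at h0
  have hM : MeasurableSet {ω | t + h < ζ ω} := measurableSet_lt measurable_const hζm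
  rw [← H t h ht hh A hA, ← h0,
    ← measure_inter_add_sdiff {ω | ζhat ω ≤ t ∧ t < ζ ω ∧ V ω ∈ A} hM]
  congr 2 <;> ext ω <;> simp only [mem_ofPred_eq, mem_inter_iff, mem_sdiff, not_lt]
  · constructor
    · rintro ⟨a, b, c⟩
      exact ⟨⟨a, by linarith, c⟩, b⟩
    · rintro ⟨⟨a, b, c⟩, d⟩
      exact ⟨a, d, c⟩
  · tauto

/-- The set of `x ∈ (0, t]` lying in `[w, z)` within distance `h` before `z` has length exactly
`h` for small `h` when `w < z ≤ t`, and is empty for small `h` otherwise. -/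
theorem window_length {z w t : ℝ} (hw : 0 ≤ w) (p : Prop) [Decidable p] :
    ∀ᶠ h in nhdsWithin (0 : ℝ) (Ioi 0), ENNReal.ofReal h⁻¹ *
      (volume.restrict (Ioc 0 t)) {x | w ≤ x ∧ x < z ∧ z ≤ x + h ∧ p} =
      if w < z ∧ z ≤ t ∧ p then 1 else 0 := by
  have hpos : ∀ᶠ h in nhdsWithin (0 : ℝ) (Ioi 0), 0 < h := self_mem_nhdsWithin
  have hsmall : ∀ c : ℝ, 0 < c → ∀ᶠ h in nhdsWithin (0 : ℝ) (Ioi 0), h < c := fun c hc =>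
    nhdsWithin_le_nhds (Iio_mem_nhds hc)
  split_ifs with hc
  · obtain ⟨h1, h2, h3⟩ := hc
    filter_upwards [hpos, hsmall (z - w) (by linarith)] with h h0 hs
    have hvol : (volume.restrict (Ioc 0 t)) {x | w ≤ x ∧ x < z ∧ z ≤ x + h ∧ p} =
        ENNReal.ofReal h := by
      rw [Measure.restrict_apply' measurableSet_Ioc]
      apply le_antisymm
      · calc _ ≤ volume (Ico (z - h) z) := measure_mono fun x hx =>
              ⟨by linarith [hx.1.2.2.1], hx.1.2.1⟩
          _ = _ := by rw [Real.volume_Ico]; congr 1; ring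
      · calc _ = volume (Ioo (z - h) z) := by rw [Real.volume_Ioo]; congr 1; ring
          _ ≤ volume ({x | w ≤ x ∧ x < z ∧ z ≤ x + h ∧ p} ∩ Ioc 0 t) := measure_mono fun x hx =>
              ⟨⟨by linarith [hx.1], hx.2, by linarith [hx.1], h3⟩,
                by linarith [hx.1], by linarith [hx.2]⟩
    rw [hvol, ← ENNReal.ofReal_mul (by positivity), inv_mul_cancel₀ h0.ne', ENNReal.ofReal_one]
  · have hev : ∀ᶠ h in nhdsWithin (0 : ℝ) (Ioi 0), t < z → h < z - t := by
      by_cases htz : t < z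
      · filter_upwards [hsmall (z - t) (by linarith)] with h hh _ using hh
      · exact Filter.Eventually.of_forall fun h h' => absurd h' htz
    filter_upwards [hev] with h hh
    have : (volume.restrict (Ioc 0 t)) {x | w ≤ x ∧ x < z ∧ z ≤ x + h ∧ p} = 0 := by
      rw [Measure.restrict_apply' measurableSet_Ioc]
      convert measure_empty (μ := (volume : Measure ℝ))
      ext x
      simp only [mem_inter_iff, mem_ofPred_eq, mem_Ioc, mem_empty_iff_false, iff_false]
      rintro ⟨⟨a, b, c, d⟩, e, f⟩
      refine hc ⟨by linarith, ?_, d⟩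
      by_contra! htz
      linarith [hh htz]
    rw [this, mul_zero]

theorem window_length_le {z w t h : ℝ} (hh : 0 < h) (p : Prop) : ENNReal.ofReal h⁻¹ *
      (volume.restrict (Ioc 0 t)) {x | w ≤ x ∧ x < z ∧ z ≤ x + h ∧ p} ≤ 1 := by
  calc _ ≤ ENNReal.ofReal h⁻¹ * volume (Ico (z - h) z) := by
        refine mul_le_mul_right ?_ _
        refine (Measure.restrict_apply_le _ _).trans (measure_mono fun x hx => ?_)
        exact ⟨by linarith [hx.2.2.1], hx.2.1⟩
    _ = 1 := by
        rw [Real.volume_Ico, ← ENNReal.ofReal_mul (by positivity), sub_sub_cancel,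
          inv_mul_cancel₀ hh.ne', ENNReal.ofReal_one]

theorem tendsto_inv_mul_one_sub_exp (γ : ℝ) :
    Filter.Tendsto (fun h : ℝ => h⁻¹ * (1 - Real.exp (-γ * h))) (nhdsWithin 0 (Ioi 0))
      (nhds γ) := by
  have hd : HasDerivAt (fun h : ℝ => 1 - Real.exp (-γ * h)) γ 0 := by
    have := (((hasDerivAt_id (0 : ℝ)).const_mul (-γ)).exp).const_sub 1
    simpa using this
  simpa using hd.tendsto_slope_zero_right

/-- `ζ` is reached strictly after `ζhat` at rate `γ σ(x) dx`, with an independent mark `V`. The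
probability that `ζ ∈ (x, x + h]` with `ζhat ≤ x` is integrated over `x ∈ (0, t]`, divided by `h`
and evaluated by Tonelli; then `h → 0`. -/
theorem MemorylessTail.strict_lt [IsProbabilityMeasure P] [IsProbabilityMeasure μ]
    (H : MemorylessTail P μ γ ζ V ζhat) (hγ : 0 < γ)
    (hζm : Measurable ζ) (hVm : Measurable V)
    (hζhatm : Measurable ζhat) (hζhat0 : ∀ ω, 0 ≤ ζhat ω)
    {t : ℝ} (ht : 0 ≤ t) {A : Set S} (hA : MeasurableSet A) :
    P {ω | ζhat ω < ζ ω ∧ ζ ω ≤ t ∧ V ω ∈ A} =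
      μ A * ENNReal.ofReal (γ * ∫ x in (0 : ℝ)..t, (P {ω | ζhat ω ≤ x ∧ x < ζ ω}).toReal) := by
  classical
  have hf : Measurable fun q : ℝ × Ω => ζhat q.2 := hζhatm.comp measurable_snd
  have hz : Measurable fun q : ℝ × Ω => ζ q.2 := hζm.comp measurable_snd
  have hB : ∀ h : ℝ, MeasurableSet
      {q : ℝ × Ω | ζhat q.2 ≤ q.1 ∧ q.1 < ζ q.2 ∧ ζ q.2 ≤ q.1 + h ∧ V q.2 ∈ A} := fun h =>
    (measurableSet_le hf measurable_fst).inter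
      ((measurableSet_lt measurable_fst hz).inter
        ((measurableSet_le hz (measurable_fst.add_const h)).inter
          ((hVm.comp measurable_snd) hA)))
  have hσm : Measurable fun x : ℝ => P {ω | ζhat ω ≤ x ∧ x < ζ ω} :=
    measurable_measure_prodMk_left (ν := P) (s := {q : ℝ × Ω | ζhat q.2 ≤ q.1 ∧ q.1 < ζ q.2})
      ((measurableSet_le hf measurable_fst).inter (measurableSet_lt measurable_fst hz))
  have tonelli : ∀ h : ℝ, 0 < h →
      ∫⁻ ω, ENNReal.ofReal h⁻¹ * (volume.restrict (Ioc 0 t))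
        {x | ζhat ω ≤ x ∧ x < ζ ω ∧ ζ ω ≤ x + h ∧ V ω ∈ A} ∂P =
      (∫⁻ x in Ioc 0 t, P {ω | ζhat ω ≤ x ∧ x < ζ ω}) *
        (ENNReal.ofReal (h⁻¹ * (1 - Real.exp (-γ * h))) * μ A) := by
    intro h hh
    have hm := measurable_measure_prodMk_right (μ := volume.restrict (Ioc 0 t)) (hB h)
    simp only [preimage_ofPred_eq] at hm
    rw [lintegral_const_mul _ hm]
    have e1 := Measure.prod_apply_symm (μ := volume.restrict (Ioc 0 t)) (ν := P) (hB h)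
    rw [Measure.prod_apply (hB h)] at e1
    simp only [preimage_ofPred_eq] at e1
    rw [← e1, setLIntegral_congr_fun measurableSet_Ioc
      (fun x hx => H.window hγ hζm hx.1.le hh.le hA), lintegral_mul_const _ hσm,
      ENNReal.ofReal_mul (by positivity)]
    ring
  have lim1 : Filter.Tendsto (fun h : ℝ => ∫⁻ ω, ENNReal.ofReal h⁻¹ * (volume.restrict (Ioc 0 t))
        {x | ζhat ω ≤ x ∧ x < ζ ω ∧ ζ ω ≤ x + h ∧ V ω ∈ A} ∂P) (nhdsWithin 0 (Ioi 0))
      (nhds (∫⁻ ω, (if ζhat ω < ζ ω ∧ ζ ω ≤ t ∧ V ω ∈ A then 1 else 0) ∂P)) := by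
    refine tendsto_lintegral_filter_of_dominated_convergence (fun _ => 1) ?_ ?_ (by simp) ?_
    · exact Filter.Eventually.of_forall fun h =>
        (measurable_measure_prodMk_right (hB h)).const_mul _
    · filter_upwards [self_mem_nhdsWithin] with h hh
      exact Filter.Eventually.of_forall fun ω => window_length_le hh _
    · refine Filter.Eventually.of_forall fun ω => ?_
      exact tendsto_const_nhds.congr' ((window_length (hζhat0 ω) _).mono fun h hh => hh.symm)
  have hI : ∫⁻ x in Ioc 0 t, P {ω | ζhat ω ≤ x ∧ x < ζ ω} =
      ENNReal.ofReal (∫ x in (0 : ℝ)..t, (P {ω | ζhat ω ≤ x ∧ x < ζ ω}).toReal) := by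
    rw [intervalIntegral.integral_of_le ht, integral_toReal hσm.aemeasurable
      (Filter.Eventually.of_forall fun x => measure_lt_top _ _), ENNReal.ofReal_toReal]
    refine ne_top_of_le_ne_top (b := ∫⁻ x in Ioc 0 t, 1) (by simp) ?_
    exact lintegral_mono fun x => prob_le_one
  have lim2 : Filter.Tendsto (fun h : ℝ => (∫⁻ x in Ioc 0 t, P {ω | ζhat ω ≤ x ∧ x < ζ ω}) *
        (ENNReal.ofReal (h⁻¹ * (1 - Real.exp (-γ * h))) * μ A)) (nhdsWithin 0 (Ioi 0))
      (nhds ((∫⁻ x in Ioc 0 t, P {ω | ζhat ω ≤ x ∧ x < ζ ω}) * (ENNReal.ofReal γ * μ A))) := by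
    refine ENNReal.Tendsto.const_mul (ENNReal.Tendsto.mul_const
      (ENNReal.tendsto_ofReal (tendsto_inv_mul_one_sub_exp γ)) (Or.inr (measure_ne_top _ _)))
      (Or.inr ?_)
    rw [hI]
    exact ENNReal.ofReal_ne_top
  have hE : MeasurableSet {ω | ζhat ω < ζ ω ∧ ζ ω ≤ t ∧ V ω ∈ A} :=
    (measurableSet_lt hζhatm hζm).inter ((measurableSet_le hζm measurable_const).inter (hVm hA))
  -- The two families agree for `h > 0`, so their limits at `0` agree.
  have e := tendsto_nhds_unique (lim1.congr' (by
    filter_upwards [self_mem_nhdsWithin] with h hh using tonelli h hh)) lim2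
  have e0 : ∫⁻ ω, (if ζhat ω < ζ ω ∧ ζ ω ≤ t ∧ V ω ∈ A then 1 else 0) ∂P =
      P {ω | ζhat ω < ζ ω ∧ ζ ω ≤ t ∧ V ω ∈ A} := by
    rw [← lintegral_indicator_one hE]
    simp only [indicator_apply, mem_ofPred_eq, Pi.one_apply]
  rw [← e0, e, hI, ENNReal.ofReal_mul hγ.le]
  ring

end


/-- Theorem 3.2 (first part): if `ζ̂` is a strong memoryless time for `(ζ, V)` with
parameters `(γ, μ)` and `σ(t) = ℙ(ζ̂ ≤ t, ζ > t)`, then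
(i)  `ℙ(ζ̂ ≤ s, 0 < ζ − ζ̂ ≤ u, V ∈ A) = ℙ(ζ̂ ≤ s, ζ̂ < ζ)(1 − e^{−γu})μ(A)`;
(ii) `ℙ(ζ̂ ≤ t, ζ̂ < ζ) = σ(t) + γ∫₀ᵗ σ(x)dx`;
(iii) `ℙ(ζ̂ = ζ ≤ t, V ∈ A) = ℙ(ζ ≤ t, V ∈ A) − μ(A)γ∫₀ᵗ σ(x)dx`. -/
theorem stmt_6 {Ω : Type*} [MeasurableSpace Ω] (P : Measure Ω) [IsProbabilityMeasure P]
    {S : Type*} [MeasurableSpace S] (μ : Measure S) [IsProbabilityMeasure μ]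
    (γ : ℝ) (hγ : 0 < γ)
    (ζ : Ω → ℝ) (V : Ω → S) (hζm : Measurable ζ) (hVm : Measurable V)
    (hζ0 : ∀ ω, 0 ≤ ζ ω)
    (ζhat : Ω → ℝ) (hζhatm : Measurable ζhat) (hζhat0 : ∀ ω, 0 ≤ ζhat ω)
    (hle : P {ω | ζhat ω ≤ ζ ω} = 1)
    (hcond : ∀ t, 0 ≤ t → 0 < P {ω | ζhat ω ≤ t ∧ t < ζ ω} →
      Measure.map (fun ω => (ζ ω - t, V ω)) (P[|{ω | ζhat ω ≤ t ∧ t < ζ ω}]) =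
        (expν γ).prod μ)
    (σ : ℝ → ℝ) (hσdef : ∀ t, σ t = (P {ω | ζhat ω ≤ t ∧ t < ζ ω}).toReal) :
    (∀ s u : ℝ, 0 ≤ s → 0 ≤ u → ∀ A : Set S, MeasurableSet A →
      P {ω | ζhat ω ≤ s ∧ ζhat ω < ζ ω ∧ ζ ω - ζhat ω ≤ u ∧ V ω ∈ A} =
        P {ω | ζhat ω ≤ s ∧ ζhat ω < ζ ω} *
          (ENNReal.ofReal (1 - Real.exp (-γ * u)) * μ A)) ∧
    (∀ t : ℝ, 0 ≤ t →
      P {ω | ζhat ω ≤ t ∧ ζhat ω < ζ ω} =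
        ENNReal.ofReal (σ t + γ * ∫ x in (0 : ℝ)..t, σ x)) ∧
    (∀ t : ℝ, 0 ≤ t → ∀ A : Set S, MeasurableSet A →
      P {ω | ζhat ω = ζ ω ∧ ζ ω ≤ t ∧ V ω ∈ A} =
        P {ω | ζ ω ≤ t ∧ V ω ∈ A} -
          μ A * ENNReal.ofReal (γ * ∫ x in (0 : ℝ)..t, σ x)) := by
  have H := memorylessTail_of_cond hγ hζm hVm hζhatm hcond
  obtain rfl : σ = fun t => (P {ω | ζhat ω ≤ t ∧ t < ζ ω}).toReal := funext hσdef
  refine ⟨?_, ?_, ?_⟩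
  · intro s u hs hu A hA
    refine eq_mul_one_sub_of_add_eq (measure_ne_top _ _) (measure_ne_top _ _)
      (Real.exp_pos _).le (exp_neg_mul_le_one hγ hu) ?_
    have h0 := H.tail hζm hVm hζhatm hζhat0 hs le_rfl hA
    simp only [add_zero, mul_zero, Real.exp_zero, ENNReal.ofReal_one, one_mul] at h0
    have hM : MeasurableSet {ω | ζhat ω + u < ζ ω} :=
      measurableSet_lt (hζhatm.add_const u) hζm
    rw [← H.tail hζm hVm hζhatm hζhat0 hs hu hA, ← h0,
      ← measure_inter_add_sdiff {ω | ζhat ω ≤ s ∧ ζhat ω < ζ ω ∧ V ω ∈ A} hM]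
    congr 2 <;> ext ω <;> simp only [mem_ofPred_eq, mem_inter_iff, mem_sdiff, not_lt]
    · constructor
      · rintro ⟨a, b, c⟩
        exact ⟨⟨a, by linarith, c⟩, b⟩
      · rintro ⟨⟨a, b, c⟩, d⟩
        exact ⟨a, d, c⟩
    · rw [sub_le_iff_le_add']
      tauto
  · intro t ht
    -- `{ζhat ≤ t, ζhat < ζ}` splits into `{ζhat ≤ t < ζ}` and `{ζhat < ζ ≤ t}`.
    have h1 := H.strict_lt hγ hζm hVm hζhatm hζhat0 ht MeasurableSet.univ
    simp only [mem_univ, and_true, measure_univ, one_mul] at h1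
    have hnn : 0 ≤ γ * ∫ x in (0 : ℝ)..t, (P {ω | ζhat ω ≤ x ∧ x < ζ ω}).toReal :=
      mul_nonneg hγ.le (intervalIntegral.integral_nonneg ht fun x _ => ENNReal.toReal_nonneg)
    have hM : MeasurableSet {ω | t < ζ ω} := measurableSet_lt measurable_const hζm
    rw [ENNReal.ofReal_add ENNReal.toReal_nonneg hnn, ENNReal.ofReal_toReal (measure_ne_top _ _),
      ← h1, ← measure_inter_add_sdiff {ω | ζhat ω ≤ t ∧ ζhat ω < ζ ω} hM]
    congr 2 <;> ext ω <;> simp only [mem_ofPred_eq, mem_inter_iff, mem_sdiff, not_lt]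
    · constructor
      · rintro ⟨⟨a, b⟩, c⟩
        exact ⟨a, c⟩
      · rintro ⟨a, b⟩
        exact ⟨⟨a, by linarith⟩, b⟩
    · constructor
      · rintro ⟨⟨a, b⟩, c⟩
        exact ⟨b, c⟩
      · rintro ⟨a, b⟩
        exact ⟨⟨by linarith, a⟩, b⟩
  · intro t ht A hA
    rw [← H.strict_lt hγ hζm hVm hζhatm hζhat0 ht hA]
    refine ENNReal.eq_sub_of_add_eq (measure_ne_top _ _) ?_
    have hM : MeasurableSet {ω | ζhat ω < ζ ω} := measurableSet_lt hζhatm hζm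
    have hae : ∀ᵐ ω ∂P, ζhat ω ≤ ζ ω :=
      (mem_ae_iff_prob_eq_one (measurableSet_le hζhatm hζm)).2 hle
    rw [← measure_inter_add_sdiff {ω | ζ ω ≤ t ∧ V ω ∈ A} hM, add_comm]
    congr 1
    · congr 1
      ext ω
      simp only [mem_ofPred_eq, mem_inter_iff]
      tauto
    · refine measure_congr (Filter.eventuallyEq_set.2 ?_)
      filter_upwards [hae] with ω hω
      simp only [mem_ofPred_eq, mem_sdiff, not_lt]
      constructor
      · rintro ⟨a, b⟩
        exact ⟨b, a.ge⟩
      · rintro ⟨a, b⟩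
        exact ⟨le_antisymm hω b, a⟩
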